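/- arXiv:2003.01533 — 5 statements merged into one kernel-verified Lean document; each statement's English description precedes it below -/
import Mathlib

section
/- Let N, L_B, L_E be positive integers with L_B ≤ N, let A_B ∈ ℂ^{N×L_B} have full column rank, let A_E ∈ ℂ^{N×L_E} be arbitrary, and let SSR > 0 be a real number. Denote by σ_1(A_B) ≤ σ_2(A_B) ≤ … ≤ σ_{L_B}(A_B) the nonzero singular values of A_B arranged in increasing order, and by σ_1(A_E) ≥ σ_2(A_E) ≥ … ≥ σ_N(A_E) the singular values of A_E arranged in decreasing order (padding with zeros so that there are N of them). Then the quantity BMSE_floor := (1/SSR)·trace[A_B (A_Bᴴ A_B)^{−2} A_Bᴴ A_E A_Eᴴ] satisfies (1/SSR)·Σ_{ℓ=1}^{L_B} σ_{N−ℓ+1}(A_E)² / σ_ℓ(A_B)² ≤ BMSE_floor ≤ (1/SSR)·Σ_{ℓ=1}^{L_B} σ_ℓ(A_E)² / σ_ℓ(A_B)². -/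
open Matrix
theorem abel_aux : ∀ (m : ℕ) (a c : Fin m → ℝ) (t : ℝ), Antitone a → (∀ i, t ≤ a i) →
    (∀ k : ℕ, 0 ≤ ∑ i : Fin m, if i.val < k then c i else 0) →
    t * ∑ i, c i ≤ ∑ i, a i * c i := by
  intro m
  induction m with
  | zero => intro a c t _ _ _; simp
  | succ m ih =>
    intro a c t ha ht hc
    have h1 := ih (fun i => a i.castSucc) (fun i => c i.castSucc) (a (Fin.last m))
      (fun i j hij => ha (by simpa using hij)) (fun i => ha (Fin.le_last _)) (by
        intro k
        have := hc (min k m)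
        rw [Fin.sum_univ_castSucc] at this
        simpa using this)
    have h2 := hc (m+1)
    simp only [Fin.is_lt, if_true] at h2
    rw [Fin.sum_univ_castSucc (fun i => a i * c i)]
    have h3 := mul_le_mul_of_nonneg_right (ht (Fin.last m)) h2
    rw [Fin.sum_univ_castSucc] at h3 ⊢
    linarith

theorem upper_aux (m n : ℕ) (hmn : m ≤ n) (a : Fin m → ℝ) (b : Fin n → ℝ) (p : Fin m → Fin n → ℝ)
    (ha : Antitone a) (ha0 : ∀ i, 0 ≤ a i) (hb : Antitone b) (hp : ∀ i j, 0 ≤ p i j)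
    (hr : ∀ i, ∑ j, p i j = 1) (hcol : ∀ j, ∑ i, p i j ≤ 1) :
    ∑ i, a i * ∑ j, b j * p i j ≤ ∑ i, a i * b (Fin.castLE hmn i) := by
  have key := abel_aux m a (fun i => b (Fin.castLE hmn i) - ∑ j, b j * p i j) 0 ha ha0 ?_
  · simp only [mul_sub, Finset.sum_sub_distrib] at key
    linarith
  intro k
  rcases Nat.eq_zero_or_pos k with rfl | hk0
  · simp
  rcases Nat.eq_zero_or_pos m with rfl | hm0
  · simp
  set K : ℕ := min k m
  have hK : K - 1 < n := by omega
  set t := b ⟨K - 1, hK⟩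
  -- pivot
  have e1 : ∀ i : Fin m, (if i.val < k then b (Fin.castLE hmn i) - ∑ j, b j * p i j else 0)
      = ∑ j, (b j - t) * (if i.val < k then ((if j = Fin.castLE hmn i then 1 else 0) - p i j) else 0) := by
    intro i
    split_ifs with h
    · simp only [sub_mul, mul_sub, Finset.sum_sub_distrib, ← Finset.mul_sum, hr]
      simp
    · simp
  rw [Finset.sum_congr rfl (fun i _ => e1 i), Finset.sum_comm]
  apply Finset.sum_nonneg
  intro j _
  rw [← Finset.mul_sum]
  have e2 : ∑ i : Fin m, (if i.val < k then ((if j = Fin.castLE hmn i then (1:ℝ) else 0) - p i j) else 0)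
     = (∑ i : Fin m, if i.val < k then (if j = Fin.castLE hmn i then (1:ℝ) else 0) else 0) - ∑ i : Fin m, if i.val < k then p i j else 0 := by
    rw [← Finset.sum_sub_distrib]
    refine Finset.sum_congr rfl fun i _ => ?_
    split_ifs <;> simp
  rw [e2]
  by_cases hj : j.val < K
  · have hjm : j.val < m := by omega
    apply mul_nonneg
    · exact sub_nonneg.2 (hb (by rw [Fin.le_def]; simp only []; omega))
    · have : (∑ i : Fin m, if i.val < k then (if j = Fin.castLE hmn i then (1:ℝ) else 0) else 0) = 1 := by
        rw [Finset.sum_eq_single ⟨j.val, hjm⟩]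
        · rw [if_pos (by simp only []; omega), if_pos (by ext; simp)]
        · intro i _ hi
          rw [if_neg (c := j = _)]
          · simp
          · rintro rfl; exact hi (by ext; simp)
        · simp
      rw [this, sub_nonneg]
      refine le_trans (Finset.sum_le_sum fun i _ => ?_) (hcol j)
      split_ifs
      · exact le_rfl
      · exact hp i j
  · apply mul_nonneg_of_nonpos_of_nonpos
    · exact sub_nonpos.2 (hb (by rw [Fin.le_def]; simp only []; omega))
    · have : (∑ i : Fin m, if i.val < k then (if j = Fin.castLE hmn i then (1:ℝ) else 0) else 0) = 0 := by
        apply Finset.sum_eq_zero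
        intro i _
        split_ifs with h1 h2
        · exfalso; rw [h2] at hj; simp at hj; omega
        · rfl
        · rfl
      rw [this, sub_nonpos]
      apply Finset.sum_nonneg
      intro i _
      split_ifs
      · exact hp i j
      · exact le_rfl

theorem lower_aux (m n : ℕ) (hmn : m ≤ n) (a : Fin m → ℝ) (b : Fin n → ℝ) (p : Fin m → Fin n → ℝ)
    (ha : Antitone a) (ha0 : ∀ i, 0 ≤ a i) (hb : Antitone b) (hp : ∀ i j, 0 ≤ p i j)
    (hr : ∀ i, ∑ j, p i j = 1) (hcol : ∀ j, ∑ i, p i j ≤ 1) :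
    ∑ i, a i * b (Fin.rev (Fin.castLE hmn i)) ≤ ∑ i, a i * ∑ j, b j * p i j := by
  have := upper_aux m n hmn a (fun j => - b j.rev) (fun i j => p i j.rev) ha ha0
    (fun i j hij => neg_le_neg (hb (Fin.rev_le_rev.2 hij))) (fun i j => hp i _)
    (fun i => by rw [← hr i]; exact Equiv.sum_comp Fin.revPerm (fun j => p i j)) (fun j => hcol _)
  have h2 : ∀ i, ∑ j : Fin n, -b j.rev * p i j.rev = - ∑ j, b j * p i j := by
    intro i
    rw [← Finset.sum_neg_distrib]
    simp only [neg_mul]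
    exact Equiv.sum_comp Fin.revPerm (fun j => -(b j * p i j))
  simp only [h2, mul_neg, Finset.sum_neg_distrib] at this
  linarith

theorem col_aux {n m : Type*} [Fintype n] [Fintype m] [DecidableEq n] [DecidableEq m]
    (Q : Matrix n m ℂ) (hQ : Qᴴ * Q = 1) (j : n) :
    ∑ i, ‖Q j i‖ ^ 2 ≤ 1 := by
  set P := Q * Qᴴ with hP
  have hPP : P * Pᴴ = P := by
    rw [hP, conjTranspose_mul, conjTranspose_conjTranspose, Matrix.mul_assoc, ← Matrix.mul_assoc Qᴴ,
      hQ, Matrix.one_mul]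
  have gen : ∀ {l : Type _} [Fintype l] (M : Matrix n l ℂ), (M * Mᴴ) j j = ((∑ i, ‖M j i‖ ^ 2 : ℝ) : ℂ) := by
    intro l _ M
    simp [Matrix.mul_apply, Complex.mul_conj']
  have h1 := gen Q
  have h2 : (P * Pᴴ) j j = ((∑ i, ‖P j i‖ ^ 2 : ℝ) : ℂ) := by
    simp [Matrix.mul_apply, Complex.mul_conj']
  rw [hPP] at h2
  set x := ∑ i, ‖Q j i‖ ^ 2
  rw [← hP] at h1
  have h3 : x = ∑ i, ‖P j i‖ ^ 2 := by
    rw [h1] at h2; exact_mod_cast h2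
  have h4 : ‖P j j‖ ^ 2 ≤ ∑ i, ‖P j i‖ ^ 2 :=
    Finset.single_le_sum (f := fun i => ‖P j i‖ ^ 2) (fun i _ => by positivity) (Finset.mem_univ j)
  rw [h1, Complex.norm_real, Real.norm_eq_abs, sq_abs, ← h3] at h4
  nlinarith

theorem row_aux {n m : Type*} [Fintype n] [Fintype m] [DecidableEq n] [DecidableEq m]
    (Q : Matrix n m ℂ) (hQ : Qᴴ * Q = 1) (i : m) :
    ∑ j, ‖Q j i‖ ^ 2 = 1 := by
  have := congrFun (congrFun hQ i) i
  simp only [Matrix.mul_apply, conjTranspose_apply, one_apply_eq, Complex.star_def, Complex.conj_mul'] at this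
  exact_mod_cast this

theorem trace_aux {n m : Type*} [Fintype n] [Fintype m] [DecidableEq n] [DecidableEq m]
    (Q : Matrix n m ℂ) (a : m → ℝ) (b : n → ℝ) :
    (Matrix.trace (Q * diagonal (fun i => (a i : ℂ)) * Qᴴ * diagonal (fun i => (b i : ℂ)))).re
      = ∑ i, a i * ∑ j, b j * ‖Q j i‖ ^ 2 := by
  simp only [Matrix.trace, Matrix.diag_apply, Matrix.mul_diagonal]
  have h0 : ∀ j, (Q * diagonal (fun i => (a i : ℂ)) * Qᴴ) j j
      = ∑ i, Q j i * (a i : ℂ) * star (Q j i) := by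
    intro j
    rw [Matrix.mul_apply]
    refine Finset.sum_congr rfl fun i _ => ?_
    rw [Matrix.mul_diagonal, conjTranspose_apply]
  simp only [h0]
  have : ∀ j i, Q j i * (a i : ℂ) * star (Q j i) = ((a i * ‖Q j i‖ ^ 2 : ℝ) : ℂ) := by
    intro j i
    rw [mul_right_comm, Complex.star_def, Complex.mul_conj']
    push_cast; ring
  simp only [this]
  have h : ∀ j, ((∑ i, ((a i * ‖Q j i‖ ^ 2 : ℝ) : ℂ)) * (b j : ℂ)) = (((∑ i, a i * ‖Q j i‖ ^ 2) * b j : ℝ) : ℂ) := by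
    intro j; push_cast; rfl
  simp only [h]
  rw [← Complex.ofReal_sum, Complex.ofReal_re]
  simp only [Finset.sum_mul, Finset.mul_sum]
  rw [Finset.sum_comm]
  refine Finset.sum_congr rfl fun i _ => Finset.sum_congr rfl fun j _ => by ring

open scoped ComplexOrder in
theorem posdef_aux {n m : Type*} [Fintype n] [Fintype m] [DecidableEq m] (B : Matrix n m ℂ)
    (h : Function.Injective B.mulVec) (hB : (Bᴴ * B).IsHermitian) (i : m) : 0 < hB.eigenvalues i :=
  hB.posDef_iff_eigenvalues_pos.1 (Matrix.PosDef.conjTranspose_mul_self B h) i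

theorem spec_aux {n : Type*} [Fintype n] [DecidableEq n] (A : Matrix n n ℂ) (hA : A.IsHermitian) :
    ∃ U : Matrix n n ℂ, Uᴴ * U = 1 ∧ U * Uᴴ = 1 ∧
      A = U * diagonal (fun i => (hA.eigenvalues i : ℂ)) * Uᴴ := by
  refine ⟨hA.eigenvectorUnitary, ?_, ?_, ?_⟩
  · exact Unitary.coe_star_mul_self hA.eigenvectorUnitary
  · exact Unitary.coe_mul_star_self hA.eigenvectorUnitary
  · have := hA.spectral_theorem
    rw [Unitary.conjStarAlgAut_apply] at this
    exact this

theorem main_aux {n m : Type*} [Fintype n] [Fintype m] [DecidableEq n] [DecidableEq m]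
    (B : Matrix n m ℂ) (hG : (Bᴴ * B).IsHermitian) (hpos : ∀ i, 0 < hG.eigenvalues i)
    (M : Matrix n n ℂ) (hM : M.IsHermitian) :
    ∃ Q : Matrix n m ℂ, Qᴴ * Q = 1 ∧
      (Matrix.trace (B * ((Bᴴ * B) ^ 2)⁻¹ * Bᴴ * M)).re =
        ∑ i, (1 / hG.eigenvalues i) * ∑ j, hM.eigenvalues j * ‖Q j i‖ ^ 2 := by
  obtain ⟨V, hV1, hV2, hV⟩ := spec_aux _ hG
  obtain ⟨U, hU1, hU2, hU⟩ := spec_aux _ hM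
  set d := hG.eigenvalues
  set D : Matrix m m ℂ := diagonal (fun i => (d i : ℂ)) with hD
  set R : Matrix m m ℂ := diagonal (fun i => (((√(d i))⁻¹ : ℝ) : ℂ)) with hR
  set I : Matrix m m ℂ := diagonal (fun i => ((1 / d i : ℝ) : ℂ)) with hI
  have hRH : Rᴴ = R := by
    rw [hR, diagonal_conjTranspose]; congr 1; ext i; simp
  have hRR : R * R = I := by
    rw [hR, hI, diagonal_mul_diagonal]; congr 1; ext i
    rw [← Complex.ofReal_mul, ← mul_inv, Real.mul_self_sqrt (hpos i).le, one_div]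
  have hRI : R * I = I * R := by
    rw [hR, hI, diagonal_mul_diagonal, diagonal_mul_diagonal]; congr 1; ext i; ring
  have hRD : R * D = D * R := by
    rw [hR, hD, diagonal_mul_diagonal, diagonal_mul_diagonal]; congr 1; ext i; ring
  have hID : I * D = 1 := by
    rw [hI, hD, diagonal_mul_diagonal, ← diagonal_one]; congr 1; ext i
    rw [← Complex.ofReal_mul, one_div, inv_mul_cancel₀ (hpos i).ne', Complex.ofReal_one]
  have hinv : ((Bᴴ * B) ^ 2)⁻¹ = V * (I * I) * Vᴴ := by
    apply Matrix.inv_eq_left_inv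
    rw [hV, pow_two]
    calc V * (I * I) * Vᴴ * (V * D * Vᴴ * (V * D * Vᴴ))
        = V * (I * (I * ((Vᴴ * V) * (D * ((Vᴴ * V) * (D * Vᴴ)))))) := by
          simp only [Matrix.mul_assoc]
      _ = V * (I * ((I * D) * (D * Vᴴ))) := by
          simp only [hV1, Matrix.one_mul, Matrix.mul_assoc]
      _ = V * ((I * D) * Vᴴ) := by rw [hID, Matrix.one_mul, ← Matrix.mul_assoc I, hID]
      _ = 1 := by rw [hID, Matrix.one_mul, hV2]
  refine ⟨Uᴴ * (B * V * R), ?_, ?_⟩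
  · simp only [conjTranspose_mul, conjTranspose_conjTranspose, hRH]
    calc R * (Vᴴ * Bᴴ) * U * (Uᴴ * (B * V * R))
        = R * (Vᴴ * (Bᴴ * ((U * Uᴴ) * (B * (V * R))))) := by simp only [Matrix.mul_assoc]
      _ = R * (Vᴴ * ((Bᴴ * B) * (V * R))) := by
          rw [hU2, Matrix.one_mul]; simp only [Matrix.mul_assoc]
      _ = R * ((Vᴴ * V) * (D * ((Vᴴ * V) * R))) := by
          rw [hV]; simp only [Matrix.mul_assoc]
      _ = R * R * D := by
          rw [hV1, Matrix.one_mul, Matrix.one_mul, ← hRD, Matrix.mul_assoc]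
      _ = 1 := by rw [hRR, hID]
  · rw [← trace_aux, ← hI]
    congr 1
    simp only [conjTranspose_mul, conjTranspose_conjTranspose, hRH]
    rw [hinv]
    conv_lhs => rw [hU]
    have e : R * (I * R) = I * I := by rw [← hRI, ← Matrix.mul_assoc, hRR]
    calc _ = trace ((B * V * (I * I) * (Vᴴ * Bᴴ) * U * diagonal (fun i => (hM.eigenvalues i : ℂ))) * Uᴴ) := by
            simp only [Matrix.mul_assoc]
      _ = _ := by
            rw [Matrix.trace_mul_comm, ← e]
            simp only [Matrix.mul_assoc]



/-- **Lemma 1: bounds on the high-SNR BMSE floor of the least squares estimator.**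
Let `A_B ∈ ℂ^{N×L_B}` (with `0 < L_B ≤ N`) have full column rank, let
`A_E ∈ ℂ^{N×L_E}` be arbitrary, and let `SSR > 0`.  Let `sB : Fin L_B → ℝ` be the
nonzero singular values of `A_B` arranged in increasing order (i.e. a monotone,
nonnegative enumeration whose squares are, up to a permutation, the eigenvalues of
the Hermitian matrix `A_Bᴴ A_B`), and let `sE : Fin N → ℝ` be the singular values
of `A_E` arranged in decreasing order, padded with zeros so that there are `N` of
them (an antitone, nonnegative enumeration whose squares are, up to a permutation,
the eigenvalues of `A_E A_Eᴴ`).  Then the floor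
`BMSE_floor = (1/SSR)·trace[A_B (A_Bᴴ A_B)⁻² A_Bᴴ A_E A_Eᴴ]` satisfies
`(1/SSR)·Σ_{ℓ=1}^{L_B} σ_{N−ℓ+1}(A_E)²/σ_ℓ(A_B)² ≤ BMSE_floor ≤
 (1/SSR)·Σ_{ℓ=1}^{L_B} σ_ℓ(A_E)²/σ_ℓ(A_B)²`. -/
theorem lse_bmse_floor_bounds
    (N LB LE : ℕ) (hN : 0 < N) (hLB : 0 < LB) (hLE : 0 < LE) (hle : LB ≤ N)
    (AB : Matrix (Fin N) (Fin LB) ℂ) (hrank : AB.rank = LB)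
    (AE : Matrix (Fin N) (Fin LE) ℂ)
    (SSR : ℝ) (hSSR : 0 < SSR)
    (hermB : (ABᴴ * AB).IsHermitian) (hermE : (AE * AEᴴ).IsHermitian)
    (sB : Fin LB → ℝ) (sE : Fin N → ℝ)
    (hsBnn : ∀ i, 0 ≤ sB i) (hsEnn : ∀ i, 0 ≤ sE i)
    (hsBmono : Monotone sB) (hsEanti : Antitone sE)
    (eB : Fin LB ≃ Fin LB) (heB : ∀ i, sB i ^ 2 = hermB.eigenvalues (eB i))
    (eE : Fin N ≃ Fin N) (heE : ∀ i, sE i ^ 2 = hermE.eigenvalues (eE i)) :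
    (1 / SSR) * ∑ i : Fin LB, sE (Fin.rev (Fin.castLE hle i)) ^ 2 / sB i ^ 2 ≤
        (1 / SSR) *
          (Matrix.trace (AB * ((ABᴴ * AB) ^ 2)⁻¹ * ABᴴ * (AE * AEᴴ))).re ∧
      (1 / SSR) *
          (Matrix.trace (AB * ((ABᴴ * AB) ^ 2)⁻¹ * ABᴴ * (AE * AEᴴ))).re ≤
        (1 / SSR) * ∑ i : Fin LB, sE (Fin.castLE hle i) ^ 2 / sB i ^ 2 := by
  have hinj : Function.Injective AB.mulVec := by
    rw [Matrix.mulVec_injective_iff, linearIndependent_iff_card_eq_finrank_span,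
      Set.finrank, ← Matrix.rank_eq_finrank_span_cols, hrank, Fintype.card_fin]
  have hpos : ∀ i, 0 < hermB.eigenvalues i := posdef_aux AB hinj hermB
  have hsB : ∀ i, 0 < sB i := fun i => lt_of_le_of_ne (hsBnn i) (fun h => by
    have h1 := heB i
    rw [← h] at h1
    have := hpos (eB i)
    rw [← h1] at this
    simp at this)
  obtain ⟨Q, hQ, htr⟩ := main_aux AB hermB hpos _ hermE
  have htr2 : (Matrix.trace (AB * ((ABᴴ * AB) ^ 2)⁻¹ * ABᴴ * (AE * AEᴴ))).re =
      ∑ i, (1 / sB i ^ 2) * ∑ j, sE j ^ 2 * ‖Q (eE j) (eB i)‖ ^ 2 := by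
    rw [htr, ← Equiv.sum_comp eB]
    refine Finset.sum_congr rfl fun i _ => ?_
    rw [heB, ← Equiv.sum_comp eE]
    congr 1
    refine Finset.sum_congr rfl fun j _ => ?_
    rw [heE]
  have ha : Antitone (fun i => 1 / sB i ^ 2) := fun i j hij =>
    one_div_le_one_div_of_le (pow_pos (hsB i) 2) (pow_le_pow_left₀ (hsBnn i) (hsBmono hij) 2)
  have ha0 : ∀ i, 0 ≤ 1 / sB i ^ 2 := fun i => by positivity
  have hb : Antitone (fun j => sE j ^ 2) := fun i j hij =>
    pow_le_pow_left₀ (hsEnn j) (hsEanti hij) 2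
  have hp : ∀ i j, 0 ≤ ‖Q (eE j) (eB i)‖ ^ 2 := fun i j => by positivity
  have hr : ∀ i, ∑ j, ‖Q (eE j) (eB i)‖ ^ 2 = 1 := fun i => by
    rw [Equiv.sum_comp eE (fun j => ‖Q j (eB i)‖ ^ 2)]; exact row_aux Q hQ _
  have hc : ∀ j, ∑ i, ‖Q (eE j) (eB i)‖ ^ 2 ≤ 1 := fun j => by
    rw [Equiv.sum_comp eB (fun i => ‖Q (eE j) i‖ ^ 2)]; exact col_aux Q hQ _
  rw [htr2]
  have hS : 0 ≤ 1 / SSR := by positivity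
  constructor
  · refine mul_le_mul_of_nonneg_left ?_ hS
    have := lower_aux LB N hle _ _ _ ha ha0 hb hp hr hc
    refine le_trans (le_of_eq (Finset.sum_congr rfl fun i _ => ?_)) this
    ring
  · refine mul_le_mul_of_nonneg_left ?_ hS
    have := upper_aux LB N hle _ _ _ ha ha0 hb hp hr hc
    refine le_trans this (le_of_eq (Finset.sum_congr rfl fun i _ => ?_))
    ring
end

section
/- Let K_B ∈ ℂ^{N×L_B} and K_E ∈ ℂ^{N×L_E} both have full column rank, and suppose their column spaces are disjoint, i.e., range(K_B) ∩ range(K_E) = {0}. For every σ² > 0 the matrix K_Bᴴ (K_E K_Eᴴ + σ² I_N)^{−1} K_B is invertible, and lim_{σ²→0⁺} trace[ (K_Bᴴ (K_E K_Eᴴ + σ² I_N)^{−1} K_B)^{−1} ] = 0. -/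
open Matrix Filter Topology

open scoped ComplexOrder

lemma exists_canceller {N LB LE : ℕ} (KB : Matrix (Fin N) (Fin LB) ℂ)
    (KE : Matrix (Fin N) (Fin LE) ℂ) (hinj : Function.Injective KB.mulVecLin)
    (hdisj : LinearMap.range KB.mulVecLin ⊓ LinearMap.range KE.mulVecLin = ⊥) :
    ∃ W : Matrix (Fin LB) (Fin N) ℂ, W * KB = 1 ∧ W * KE = 0 := by
  set q := (LinearMap.range KE.mulVecLin).mkQ with hq
  have hker : LinearMap.ker (q ∘ₗ KB.mulVecLin) = ⊥ := by
    rw [LinearMap.ker_eq_bot']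
    intro x hx
    have h1 : KB.mulVecLin x ∈ LinearMap.range KE.mulVecLin := by
      simpa [hq] using hx
    have h2 : KB.mulVecLin x ∈ LinearMap.range KB.mulVecLin ⊓ LinearMap.range KE.mulVecLin :=
      ⟨⟨x, rfl⟩, h1⟩
    rw [hdisj, Submodule.mem_bot] at h2
    exact hinj (by rw [h2, map_zero])
  obtain ⟨g, hg⟩ := LinearMap.exists_leftInverse_of_injective _ hker
  refine ⟨LinearMap.toMatrix' (g ∘ₗ q), ?_, ?_⟩
  · apply Matrix.toLin'.injective
    rw [Matrix.toLin'_mul, Matrix.toLin'_toMatrix', Matrix.toLin'_one]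
    exact hg
  · apply Matrix.toLin'.injective
    rw [Matrix.toLin'_mul, Matrix.toLin'_toMatrix', map_zero]
    ext1 x
    have : q (KE.mulVecLin (LinearMap.single ℂ (fun _ => ℂ) x 1)) = 0 := by
      rw [hq, Submodule.mkQ_apply, Submodule.Quotient.mk_eq_zero]
      exact ⟨_, rfl⟩
    ext1
    change g (q (KE.mulVecLin (LinearMap.single ℂ (fun _ => ℂ) x 1))) = _
    rw [this]; simp

lemma posDef_R {N LE : ℕ} (KE : Matrix (Fin N) (Fin LE) ℂ) (s : ℝ) (hs : 0 < s) :
    (KE * KEᴴ + (s : ℂ) • (1 : Matrix (Fin N) (Fin N) ℂ)).PosDef := by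
  refine Matrix.PosDef.posSemidef_add (Matrix.posSemidef_self_mul_conjTranspose KE) ?_
  exact Matrix.PosDef.one.smul (by exact_mod_cast hs)

lemma gauss_markov {N LB : ℕ} (KB : Matrix (Fin N) (Fin LB) ℂ) (R : Matrix (Fin N) (Fin N) ℂ)
    (hR : R.PosDef) (W : Matrix (Fin LB) (Fin N) ℂ) (hW : W * KB = 1)
    (hM : (KBᴴ * R⁻¹ * KB).PosDef) :
    (W * R * Wᴴ - (KBᴴ * R⁻¹ * KB)⁻¹).PosSemidef := by
  set M := KBᴴ * R⁻¹ * KB with hMdef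
  have hRu : IsUnit R.det := (Matrix.isUnit_iff_isUnit_det _).1 hR.isUnit
  have hMu : IsUnit M.det := (Matrix.isUnit_iff_isUnit_det _).1 hM.isUnit
  have hRi : R⁻¹ᴴ = R⁻¹ := hR.inv.isHermitian
  have hMi : M⁻¹ᴴ = M⁻¹ := hM.inv.isHermitian
  have hW' : KBᴴ * Wᴴ = 1 := by rw [← Matrix.conjTranspose_mul, hW, Matrix.conjTranspose_one]
  set V := M⁻¹ * KBᴴ * R⁻¹ with hV
  have hVh : Vᴴ = R⁻¹ * KB * M⁻¹ := by
    simp [hV, Matrix.conjTranspose_mul, hRi, hMi, Matrix.mul_assoc, -Matrix.conjTranspose_nonsing_inv]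
  have hVR : V * R = M⁻¹ * KBᴴ := by rw [hV, Matrix.nonsing_inv_mul_cancel_right _ _ hRu]
  have hRV : R * Vᴴ = KB * M⁻¹ := by
    rw [hVh, Matrix.mul_assoc, Matrix.mul_nonsing_inv_cancel_left _ _ hRu]
  have h1 : W * R * Vᴴ = M⁻¹ := by
    rw [Matrix.mul_assoc, hRV, ← Matrix.mul_assoc, hW, Matrix.one_mul]
  have h2 : V * R * Wᴴ = M⁻¹ := by rw [hVR, Matrix.mul_assoc, hW', Matrix.mul_one]
  have h3 : V * R * Vᴴ = M⁻¹ := by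
    rw [hVR, hVh]
    have : M⁻¹ * KBᴴ * (R⁻¹ * KB * M⁻¹) = M⁻¹ * M * M⁻¹ := by
      simp only [hMdef, Matrix.mul_assoc]
    rw [this, Matrix.nonsing_inv_mul _ hMu, Matrix.one_mul]
  have h := hR.posSemidef.mul_mul_conjTranspose_same (W - V)
  have e : (W - V) * R * (W - V)ᴴ = W * R * Wᴴ - M⁻¹ := by
    rw [Matrix.conjTranspose_sub, Matrix.sub_mul, Matrix.sub_mul, Matrix.mul_sub, Matrix.mul_sub,
      h1, h2, h3]
    abel
  rwa [e] at h

/-- **Perfect spoofing cancellation for the MLE (Lemma 2).**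
Let `K_B ∈ ℂ^{N×L_B}` and `K_E ∈ ℂ^{N×L_E}` both have full column rank with
disjoint column spaces, i.e. `range(K_B) ∩ range(K_E) = {0}`.  Then for every
`σ² > 0` the matrix `K_Bᴴ (K_E K_Eᴴ + σ² I_N)⁻¹ K_B` is invertible, and
`trace[(K_Bᴴ (K_E K_Eᴴ + σ² I_N)⁻¹ K_B)⁻¹] → 0` as `σ² → 0⁺`. -/
theorem mle_perfect_spoofing_cancellation
    (N LB LE : ℕ) (KB : Matrix (Fin N) (Fin LB) ℂ) (KE : Matrix (Fin N) (Fin LE) ℂ)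
    (hrankB : KB.rank = LB) (hrankE : KE.rank = LE)
    (hdisj : LinearMap.range KB.mulVecLin ⊓ LinearMap.range KE.mulVecLin = ⊥) :
    (∀ σ2 : ℝ, 0 < σ2 →
      IsUnit (KBᴴ * (KE * KEᴴ + (σ2 : ℂ) • (1 : Matrix (Fin N) (Fin N) ℂ))⁻¹ * KB)) ∧
    Tendsto
      (fun σ2 : ℝ =>
        Matrix.trace
          ((KBᴴ * (KE * KEᴴ + (σ2 : ℂ) • (1 : Matrix (Fin N) (Fin N) ℂ))⁻¹ * KB)⁻¹))
      (𝓝[>] 0) (𝓝 0) := by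
  have hinj : Function.Injective KB.mulVecLin := by
    rw [← LinearMap.ker_eq_bot, ← Submodule.finrank_eq_zero]
    have := LinearMap.finrank_range_add_finrank_ker KB.mulVecLin
    rw [Module.finrank_fin_fun] at this
    have h2 : Module.finrank ℂ (LinearMap.range KB.mulVecLin) = LB := hrankB
    omega
  have hM : ∀ s : ℝ, 0 < s →
      (KBᴴ * (KE * KEᴴ + (s : ℂ) • (1 : Matrix (Fin N) (Fin N) ℂ))⁻¹ * KB).PosDef := fun s hs =>
    (posDef_R KE s hs).inv.conjTranspose_mul_mul_same hinj
  refine ⟨fun s hs => (hM s hs).isUnit, ?_⟩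
  obtain ⟨W, hWB, hWE⟩ := exists_canceller KB KE hinj hdisj
  have hlim : Tendsto (fun s : ℝ => ‖(s : ℂ) * (W * Wᴴ).trace‖) (𝓝[>] 0) (𝓝 0) := by
    have hc : Continuous (fun s : ℝ => ‖(s : ℂ) * (W * Wᴴ).trace‖) := by fun_prop
    have := hc.tendsto 0
    simp only [Complex.ofReal_zero, zero_mul, norm_zero] at this
    exact this.mono_left nhdsWithin_le_nhds
  refine squeeze_zero_norm' ?_ hlim
  filter_upwards [self_mem_nhdsWithin] with s hs
  have hs : 0 < s := hs
  have h0 := (hM s hs).inv.posSemidef.trace_nonneg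
  have h1 := (gauss_markov KB _ (posDef_R KE s hs) W hWB (hM s hs)).trace_nonneg
  have e : W * (KE * KEᴴ + (s : ℂ) • (1 : Matrix (Fin N) (Fin N) ℂ)) * Wᴴ
      = (s : ℂ) • (W * Wᴴ) := by
    rw [Matrix.mul_add, ← Matrix.mul_assoc, hWE]
    simp
  rw [Matrix.trace_sub, sub_nonneg, e, Matrix.trace_smul, smul_eq_mul] at h1
  exact CStarAlgebra.norm_le_norm_of_nonneg_of_le h0 h1
end

section
/- Let K_B ∈ ℂ^{N×L_B} have full column rank, let K_E ∈ ℂ^{N×L_E} be arbitrary, and let σ² > 0. Define K_B⁺ := (K_Bᴴ K_B)^{−1} K_Bᴴ (the Moore–Penrose inverse of K_B), P_B := I_N − K_B K_B⁺ (the orthogonal projector onto the orthogonal complement of range(K_B)), and R_dd := K_E K_Eᴴ + σ² I_N. Then trace[ (K_Bᴴ R_dd^{−1} K_B)^{−1} ] = σ² · trace[ (K_Bᴴ K_B)^{−1} ] + σ² · trace[ K_B⁺ K_E ( K_Eᴴ P_B K_E + σ² I_{L_E} )^{−1} K_Eᴴ (K_B⁺)ᴴ ]. -/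
open Matrix
open scoped ComplexOrder

/-- **Decomposition of the MLE Bayesian MSE (proof of Lemma 2).**
Let `K_B ∈ ℂ^{N×L_B}` have full column rank, `K_E ∈ ℂ^{N×L_E}` arbitrary and
`σ² > 0`.  With `K_B⁺ := (K_Bᴴ K_B)⁻¹ K_Bᴴ`, `P_B := I_N − K_B K_B⁺` and
`R_dd := K_E K_Eᴴ + σ² I_N`, one has
`trace[(K_Bᴴ R_dd⁻¹ K_B)⁻¹]
  = σ² trace[(K_Bᴴ K_B)⁻¹]
    + σ² trace[K_B⁺ K_E (K_Eᴴ P_B K_E + σ² I_{L_E})⁻¹ K_Eᴴ (K_B⁺)ᴴ]`. -/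
theorem mle_bmse_decomposition
    (N LB LE : ℕ) (KB : Matrix (Fin N) (Fin LB) ℂ) (hrankB : KB.rank = LB)
    (KE : Matrix (Fin N) (Fin LE) ℂ) (σ2 : ℝ) (hσ2 : 0 < σ2)
    (KBp : Matrix (Fin LB) (Fin N) ℂ) (hKBp : KBp = (KBᴴ * KB)⁻¹ * KBᴴ)
    (PB : Matrix (Fin N) (Fin N) ℂ)
    (hPB : PB = (1 : Matrix (Fin N) (Fin N) ℂ) - KB * KBp)
    (Rdd : Matrix (Fin N) (Fin N) ℂ)
    (hRdd : Rdd = KE * KEᴴ + (σ2 : ℂ) • (1 : Matrix (Fin N) (Fin N) ℂ)) :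
    Matrix.trace ((KBᴴ * Rdd⁻¹ * KB)⁻¹) =
      (σ2 : ℂ) * Matrix.trace ((KBᴴ * KB)⁻¹) +
      (σ2 : ℂ) *
        Matrix.trace
          (KBp * KE *
            (KEᴴ * PB * KE + (σ2 : ℂ) • (1 : Matrix (Fin LE) (Fin LE) ℂ))⁻¹ *
            KEᴴ * KBpᴴ) := by
  have hs : (0 : ℂ) < (σ2 : ℂ) := by exact_mod_cast hσ2
  have hG : IsUnit (KBᴴ * KB).det := by
    rw [← Matrix.isUnit_iff_isUnit_det]
    have h1 : (KBᴴ * KB).rank = LB := by rw [Matrix.rank_conjTranspose_mul_self, hrankB]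
    rw [← Matrix.linearIndependent_cols_iff_isUnit, linearIndependent_iff_card_eq_finrank_span,
      Set.finrank, ← Matrix.rank_eq_finrank_span_cols, h1, Fintype.card_fin]
  have hGh : ((KBᴴ * KB)⁻¹)ᴴ = (KBᴴ * KB)⁻¹ := by
    rw [Matrix.conjTranspose_nonsing_inv]; simp
  have hKh : KBpᴴ = KB * (KBᴴ * KB)⁻¹ := by
    rw [hKBp, Matrix.conjTranspose_mul, hGh, Matrix.conjTranspose_conjTranspose]
  have hBK : KBᴴ * KBpᴴ = 1 := by
    rw [hKh, ← Matrix.mul_assoc, Matrix.mul_nonsing_inv _ hG]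
  have hKB : KBp * KB = 1 := by
    rw [hKBp, Matrix.mul_assoc, Matrix.nonsing_inv_mul _ hG]
  have hPh : PBᴴ = PB := by
    rw [hPB, Matrix.conjTranspose_sub, Matrix.conjTranspose_mul, hKh, hKBp]
    simp [Matrix.mul_assoc]
  have hBP : KBᴴ * PB = 0 := by
    rw [← hPh, hPB, Matrix.conjTranspose_sub, Matrix.conjTranspose_mul, Matrix.mul_sub,
      ← Matrix.mul_assoc, hBK]
    simp
  have hPB0 : PB * KB = 0 := by
    rw [hPB, Matrix.sub_mul, Matrix.mul_assoc, hKB]; simp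
  have hPP : PBᴴ * PB = PB := by
    rw [hPh]
    nth_rewrite 2 [hPB]
    rw [Matrix.mul_sub, ← Matrix.mul_assoc, hPB0]; simp
  have hR : IsUnit Rdd.det := by
    rw [← Matrix.isUnit_iff_isUnit_det, hRdd]
    exact (Matrix.PosDef.posSemidef_add (Matrix.posSemidef_self_mul_conjTranspose KE)
      (Matrix.PosDef.one.smul hs)).isUnit
  have hM : IsUnit (KEᴴ * PB * KE + (σ2 : ℂ) • (1 : Matrix (Fin LE) (Fin LE) ℂ)).det := by
    rw [← Matrix.isUnit_iff_isUnit_det]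
    have h0 : PB.PosSemidef := by
      rw [← hPP]; exact Matrix.posSemidef_conjTranspose_mul_self PB
    exact (Matrix.PosDef.posSemidef_add (h0.conjTranspose_mul_mul_same KE)
      (Matrix.PosDef.one.smul hs)).isUnit
  have hMM := Matrix.mul_nonsing_inv _ hM
  set W := (KEᴴ * PB * KE + (σ2 : ℂ) • (1 : Matrix (Fin LE) (Fin LE) ℂ))⁻¹ with hW
  have hMM' : KEᴴ * (PB * (KE * W)) = 1 - (σ2 : ℂ) • W := by
    rw [← hMM]; simp [Matrix.add_mul, Matrix.mul_assoc]
  set X := (σ2 : ℂ) • (KBᴴ * KB)⁻¹ + (σ2 : ℂ) • (KBp * KE * W * KEᴴ * KBpᴴ) with hX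
  have hQ : KB * KBp = 1 - PB := by rw [hPB]; simp
  have hBX : KB * X = Rdd * (KBpᴴ - PB * (KE * W) * (KEᴴ * KBpᴴ)) := by
    have e1 : KB * X = (σ2 : ℂ) • KBpᴴ + (σ2 : ℂ) • ((KB * KBp) * (KE * W * (KEᴴ * KBpᴴ))) := by
      rw [hX, hKh]; simp [Matrix.mul_add, Matrix.mul_assoc]
    have e2 : Rdd * (KBpᴴ - PB * (KE * W) * (KEᴴ * KBpᴴ))
        = KE * (KEᴴ * KBpᴴ) + (σ2 : ℂ) • KBpᴴ
          - KE * (KEᴴ * (PB * (KE * W))) * (KEᴴ * KBpᴴ)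
          - (σ2 : ℂ) • (PB * (KE * W) * (KEᴴ * KBpᴴ)) := by
      rw [hRdd]
      simp only [Matrix.mul_sub, Matrix.add_mul, Matrix.mul_assoc, Matrix.smul_mul, Matrix.one_mul]
      abel
    rw [e1, e2, hQ, hMM']
    simp only [Matrix.mul_sub, Matrix.sub_mul, Matrix.mul_assoc, Matrix.smul_mul, Matrix.mul_smul,
      Matrix.one_mul, Matrix.mul_one, smul_sub]
    abel
  have hinv : (KBᴴ * Rdd⁻¹ * KB) * X = 1 := by
    rw [Matrix.mul_assoc, hBX, Matrix.mul_assoc, Matrix.nonsing_inv_mul_cancel_left _ _ hR,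
      Matrix.mul_sub, hBK, Matrix.mul_assoc, ← Matrix.mul_assoc KBᴴ, hBP]
    simp
  rw [Matrix.inv_eq_right_inv hinv, hX, Matrix.trace_add, Matrix.trace_smul, Matrix.trace_smul,
    smul_eq_mul, smul_eq_mul]
end

section
/- Let K_B ∈ ℂ^{N×L_B} have full column rank, let K_E ∈ ℂ^{N×L_E} satisfy range(K_E) ⊆ range(K_B), and set K_B⁺ := (K_Bᴴ K_B)^{−1} K_Bᴴ. Then lim_{σ²→0⁺} trace[ (K_Bᴴ (K_E K_Eᴴ + σ² I_N)^{−1} K_B)^{−1} ] = trace[ K_B⁺ K_E K_Eᴴ (K_B⁺)ᴴ ], and this limit is strictly positive whenever K_E ≠ 0. -/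
open Matrix Filter Topology
open scoped ComplexOrder

/-- **MLE error floor when the spoofing subspace is contained in the legitimate
subspace.**  Let `K_B ∈ ℂ^{N×L_B}` have full column rank, let
`K_E ∈ ℂ^{N×L_E}` satisfy `range(K_E) ⊆ range(K_B)`, and set
`K_B⁺ := (K_Bᴴ K_B)⁻¹ K_Bᴴ`.  Then
`trace[(K_Bᴴ (K_E K_Eᴴ + σ² I_N)⁻¹ K_B)⁻¹] → trace[K_B⁺ K_E K_Eᴴ (K_B⁺)ᴴ]`
as `σ² → 0⁺`, and this limit is a strictly positive real number whenever
`K_E ≠ 0`. -/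
theorem mle_error_floor
    (N LB LE : ℕ) (KB : Matrix (Fin N) (Fin LB) ℂ) (hrankB : KB.rank = LB)
    (KE : Matrix (Fin N) (Fin LE) ℂ)
    (hrange : LinearMap.range KE.mulVecLin ≤ LinearMap.range KB.mulVecLin)
    (KBp : Matrix (Fin LB) (Fin N) ℂ) (hKBp : KBp = (KBᴴ * KB)⁻¹ * KBᴴ) :
    Tendsto
      (fun σ2 : ℝ =>
        Matrix.trace
          ((KBᴴ * (KE * KEᴴ + (σ2 : ℂ) • (1 : Matrix (Fin N) (Fin N) ℂ))⁻¹ * KB)⁻¹))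
      (𝓝[>] 0) (𝓝 (Matrix.trace (KBp * KE * KEᴴ * KBpᴴ))) ∧
    (KE ≠ 0 →
      (Matrix.trace (KBp * KE * KEᴴ * KBpᴴ)).im = 0 ∧
      0 < (Matrix.trace (KBp * KE * KEᴴ * KBpᴴ)).re) := by
  have hG : IsUnit (KBᴴ * KB) := by
    have hli : LinearIndependent ℂ (KBᴴ * KB).col := by
      rw [linearIndependent_iff_card_eq_finrank_span, Set.finrank,
        ← Matrix.rank_eq_finrank_span_cols, Matrix.rank_conjTranspose_mul_self, hrankB]
      simp
    exact Matrix.linearIndependent_cols_iff_isUnit.mp hli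
  have hGd : IsUnit (KBᴴ * KB).det := (Matrix.isUnit_iff_isUnit_det _).mp hG
  obtain ⟨M, rfl⟩ : ∃ M : Matrix (Fin LB) (Fin LE) ℂ, KE = KB * M := by
    have h : ∀ j, ∃ v, KB *ᵥ v = KE.col j := by
      intro j
      obtain ⟨v, hv⟩ := hrange ⟨Pi.single j 1, rfl⟩
      exact ⟨v, by simpa using hv⟩
    choose f hf using h
    refine ⟨fun i j => f j i, ?_⟩
    ext i j
    exact (congrFun (hf j) i).symm
  have hM : KBp * (KB * M) = M := by
    rw [hKBp, Matrix.mul_assoc, ← Matrix.mul_assoc KBᴴ, ← Matrix.mul_assoc,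
      Matrix.nonsing_inv_mul _ hGd, Matrix.one_mul]
  have hlim : KBp * (KB * M) * (KB * M)ᴴ * KBpᴴ = M * Mᴴ := by
    rw [Matrix.mul_assoc, ← Matrix.conjTranspose_mul, hM]
  rw [hlim]
  refine ⟨?_, ?_⟩
  · have key : ∀ s : ℝ, 0 < s →
        (KBᴴ * ((KB * M) * (KB * M)ᴴ + (s : ℂ) • (1 : Matrix (Fin N) (Fin N) ℂ))⁻¹ * KB)⁻¹
          = M * Mᴴ + (s : ℂ) • (KBᴴ * KB)⁻¹ := by
      intro s hs
      set S := (KB * M) * (KB * M)ᴴ + (s : ℂ) • (1 : Matrix (Fin N) (Fin N) ℂ) with hS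
      have hSp : S.PosDef := by
        refine Matrix.PosDef.posSemidef_add (Matrix.posSemidef_self_mul_conjTranspose _) ?_
        exact Matrix.PosDef.one.smul (by exact_mod_cast hs)
      have hSd : IsUnit S.det := (Matrix.isUnit_iff_isUnit_det _).mp hSp.isUnit
      have h1 : S * KB = KB * (M * Mᴴ + (s : ℂ) • (KBᴴ * KB)⁻¹) * (KBᴴ * KB) := by
        rw [Matrix.mul_assoc, Matrix.add_mul (M * Mᴴ), Matrix.smul_mul, Matrix.nonsing_inv_mul _ hGd, hS]
        simp only [Matrix.conjTranspose_mul, Matrix.add_mul, Matrix.mul_add, Matrix.mul_assoc,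
          Matrix.smul_mul, Matrix.mul_smul, Matrix.one_mul, Matrix.mul_one]
      have h2 : S⁻¹ * (KB * (M * Mᴴ + (s : ℂ) • (KBᴴ * KB)⁻¹)) = KB * (KBᴴ * KB)⁻¹ := by
        have : KB * (M * Mᴴ + (s : ℂ) • (KBᴴ * KB)⁻¹) = S * (KB * (KBᴴ * KB)⁻¹) := by
          rw [← Matrix.mul_assoc S, h1, Matrix.mul_assoc _ (KBᴴ * KB),
            Matrix.mul_nonsing_inv _ hGd, Matrix.mul_one]
        rw [this, ← Matrix.mul_assoc, Matrix.nonsing_inv_mul _ hSd, Matrix.one_mul]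
      apply Matrix.inv_eq_right_inv
      rw [Matrix.mul_assoc, Matrix.mul_assoc, h2, ← Matrix.mul_assoc,
        Matrix.mul_nonsing_inv _ hGd]
    have hc : Continuous fun s : ℝ => Matrix.trace (M * Mᴴ + (s : ℂ) • (KBᴴ * KB)⁻¹) := by
      fun_prop
    have ht := (hc.tendsto 0).mono_left (nhdsWithin_le_nhds (s := Set.Ioi 0))
    simp only [Complex.ofReal_zero, zero_smul, add_zero] at ht
    refine ht.congr' ?_
    filter_upwards [self_mem_nhdsWithin] with s hs
    rw [key s hs]
  · intro hne
    have hM0 : M ≠ 0 := by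
      rintro rfl
      simp at hne
    have h0 : 0 ≤ (M * Mᴴ).trace := (Matrix.posSemidef_self_mul_conjTranspose M).trace_nonneg
    have h1 : (M * Mᴴ).trace ≠ 0 := fun h =>
      hM0 (Matrix.trace_mul_conjTranspose_self_eq_zero_iff.mp h)
    have h2 := lt_of_le_of_ne h0 h1.symm
    rw [Complex.lt_def] at h2
    exact ⟨h2.2.symm, h2.1⟩
end

section
/- Let R ∈ ℂ^{N×N} be Hermitian positive definite and let K ∈ ℂ^{N×L} have full column rank. Then Kᴴ R^{−1} K and Kᴴ K are invertible and trace[ (Kᴴ R^{−1} K)^{−1} ] ≤ trace[ (Kᴴ K)^{−1} Kᴴ R K (Kᴴ K)^{−1} ]. -/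
open Matrix ComplexOrder

/-- **BMSE_ML ≤ BMSE_LS.** If `R ∈ ℂ^{N×N}` is Hermitian positive definite and
`K ∈ ℂ^{N×L}` has full column rank, then `Kᴴ R⁻¹ K` and `Kᴴ K` are invertible and
`trace[(Kᴴ R⁻¹ K)⁻¹] ≤ trace[(Kᴴ K)⁻¹ Kᴴ R K (Kᴴ K)⁻¹]` (the traces are real, so
the inequality is stated between their real parts). -/
theorem bmse_ml_le_bmse_ls
    (N L : ℕ) (R : Matrix (Fin N) (Fin N) ℂ) (hR : R.PosDef)
    (K : Matrix (Fin N) (Fin L) ℂ) (hrank : K.rank = L) :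
    IsUnit (Kᴴ * R⁻¹ * K) ∧ IsUnit (Kᴴ * K) ∧
    (Matrix.trace ((Kᴴ * R⁻¹ * K)⁻¹)).re ≤
      (Matrix.trace ((Kᴴ * K)⁻¹ * Kᴴ * R * K * (Kᴴ * K)⁻¹)).re := by
  have hinj : Function.Injective K.mulVec := by
    have h := LinearMap.finrank_range_add_finrank_ker K.mulVecLin
    have h1 : Module.finrank ℂ (LinearMap.range K.mulVecLin) = L := hrank
    rw [h1, Module.finrank_fin_fun] at h
    have h2 : LinearMap.ker K.mulVecLin = ⊥ := Submodule.finrank_eq_zero.mp (by omega)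
    exact LinearMap.ker_eq_bot.mp h2
  have hA : (Kᴴ * R⁻¹ * K).PosDef := hR.inv.conjTranspose_mul_mul_same hinj
  have hB : (Kᴴ * K).PosDef := by
    simpa using (PosDef.one (n := Fin N) (R := ℂ)).conjTranspose_mul_mul_same hinj
  refine ⟨hA.isUnit, hB.isUnit, ?_⟩
  have hRd := (Matrix.isUnit_iff_isUnit_det _).mp hR.isUnit
  have hAd := (Matrix.isUnit_iff_isUnit_det _).mp hA.isUnit
  have hBd := (Matrix.isUnit_iff_isUnit_det _).mp hB.isUnit
  have hGh : ((Kᴴ * K)⁻¹)ᴴ = (Kᴴ * K)⁻¹ := hB.inv.isHermitian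
  have hMh : ((Kᴴ * R⁻¹ * K)⁻¹)ᴴ = (Kᴴ * R⁻¹ * K)⁻¹ := hA.inv.isHermitian
  have hRh : (R⁻¹)ᴴ = R⁻¹ := hR.inv.isHermitian
  have e1 := Matrix.nonsing_inv_mul _ hBd
  have e2 := Matrix.mul_nonsing_inv _ hBd
  have e3 := Matrix.mul_nonsing_inv _ hAd
  have e4 := Matrix.mul_nonsing_inv _ hRd
  have e5 := Matrix.nonsing_inv_mul _ hRd
  generalize (Kᴴ * K)⁻¹ = G at *
  generalize (Kᴴ * R⁻¹ * K)⁻¹ = M at *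
  generalize R⁻¹ = S at *
  have key : (K * G - S * K * M)ᴴ * R * (K * G - S * K * M)
      = G * Kᴴ * R * K * G - M := by
    have t1 : G * Kᴴ * R * (S * K * M) = M := by
      calc _ = G * Kᴴ * (R * S) * K * M := by simp only [Matrix.mul_assoc]
        _ = (G * (Kᴴ * K)) * M := by rw [e4]; simp only [Matrix.mul_assoc, Matrix.one_mul]
        _ = M := by rw [e1, Matrix.one_mul]
    have t2 : M * Kᴴ * S * R * (K * G) = M := by
      calc _ = M * Kᴴ * (S * R) * K * G := by simp only [Matrix.mul_assoc]
        _ = M * ((Kᴴ * K) * G) := by rw [e5]; simp only [Matrix.mul_assoc, Matrix.one_mul]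
        _ = M := by rw [e2, Matrix.mul_one]
    have t3 : M * Kᴴ * S * R * (S * K * M) = M := by
      calc _ = M * Kᴴ * (S * R) * S * K * M := by simp only [Matrix.mul_assoc]
        _ = M * ((Kᴴ * S * K) * M) := by rw [e5]; simp only [Matrix.mul_assoc, Matrix.one_mul]
        _ = M := by rw [e3, Matrix.mul_one]
    have hc : (K * G - S * K * M)ᴴ = G * Kᴴ - M * Kᴴ * S := by
      simp only [conjTranspose_sub, conjTranspose_mul, hGh, hMh, hRh, Matrix.mul_assoc]
    rw [hc, Matrix.sub_mul, Matrix.sub_mul, Matrix.mul_sub, Matrix.mul_sub, t1, t2, t3]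
    simp only [Matrix.mul_assoc, sub_self, sub_zero]
  have h := (hR.posSemidef.conjTranspose_mul_mul_same (K * G - S * K * M)).trace_nonneg
  rw [key, trace_sub] at h
  have h' := (Complex.le_def.mp h).1
  simp only [Complex.zero_re, Complex.sub_re] at h'
  linarith
end
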